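/- For each a ∈ {-2,-1,0,1}, the Weyl group W acts transitively on the set {(e1,e2) ∈ E × E : e1·e2 = a}; that is, for any two pairs (e1,e2), (f1,f2) of roots with e1·e2 = a and f1·f2 = a there exists w ∈ W with w(e1) = f1 and w(e2) = f2. -/

import Mathlib

/-!
Two roots `x`, `y` with `x · y = 1` are exchanged by the reflection in the root `x - y`, and this
reflection fixes every `r` with `r · x = r · y`. Since distinct roots have inner product at most
`1`, *any* two roots with `0 < x · y` and `r · x = r · y` are conjugate over `r`. It remains to
connect the roots by chains with positive consecutive inner products. Take the all-halves root `h`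
as base point. A nonzero `x` with `0 ≤ h · x` has two coordinates with positive sum, so it has
positive inner product with some `εᵢ + εⱼ`, hence `x` is conjugate to `h`; and `-x` is conjugate
to `x`. Similarly, the roots of height `h · x = 1` are linked over `h` to the `εᵢ + εⱼ`, those of
height `0` to the `εᵢ - εⱼ`, and negative heights are handled by passing to `-x`.
-/

noncomputable section

/-- The standard dot product on ℝ^8. -/
def dot (a b : Fin 8 → ℝ) : ℝ := ∑ i, a i * b i

/-- Membership in the E8 lattice Λ: all coordinates are integers or all lie in ℤ + 1/2,
and the coordinates sum to an even integer. -/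
def inLambda (a : Fin 8 → ℝ) : Prop :=
  ((∀ i, ∃ n : ℤ, a i = n) ∨ (∀ i, ∃ n : ℤ, a i = n + 1 / 2)) ∧
    ∃ n : ℤ, (∑ i, a i) = 2 * n

/-- The E8 root system E: lattice vectors of squared norm 2. -/
def isRoot (a : Fin 8 → ℝ) : Prop := inLambda a ∧ dot a a = 2

/-- The Weyl group W: linear isometries of ℝ^8 mapping the root system E onto itself. -/
def IsWeyl (w : (Fin 8 → ℝ) ≃ₗ[ℝ] (Fin 8 → ℝ)) : Prop :=
  (∀ a b : Fin 8 → ℝ, dot (w a) (w b) = dot a b) ∧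
    (⇑w '' {a | isRoot a} = {a | isRoot a})

section Coordinates

variable {ι M : Type*} [Fintype ι] [AddCommGroup M] [LinearOrder M] [IsOrderedAddMonoid M]
  {x : ι → M}

lemma exists_neg_and_exists_pos_of_sum_eq_zero (hx : x ≠ 0) (hsum : ∑ i, x i = 0) :
    (∃ i, x i < 0) ∧ ∃ i, 0 < x i := by
  obtain ⟨k, hk⟩ := Function.ne_iff.1 hx
  obtain ⟨i, -, hi⟩ := Finset.exists_pos_of_sum_zero_of_exists_nonzero x hsum
    ⟨k, Finset.mem_univ k, hk⟩
  obtain ⟨j, -, hj⟩ := Finset.exists_pos_of_sum_zero_of_exists_nonzero (-x) (by simp [hsum])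
    ⟨k, Finset.mem_univ k, neg_ne_zero.2 hk⟩
  exact ⟨⟨j, neg_pos.1 hj⟩, i, hi⟩

lemma exists_pos_of_sum_nonneg (hx : x ≠ 0) (hsum : 0 ≤ ∑ i, x i) : ∃ i, 0 < x i := by
  rcases hsum.eq_or_lt' with hsum | hsum
  · exact (exists_neg_and_exists_pos_of_sum_eq_zero hx hsum).2
  · obtain ⟨i, -, hi⟩ := Finset.exists_lt_of_sum_lt (s := Finset.univ) (f := fun _ ↦ (0 : M))
      (g := x) (by simpa only [Finset.sum_const_zero] using hsum)
    exact ⟨i, hi⟩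

lemma exists_ne_add_pos_of_sum_nonneg (hι : 2 < Fintype.card ι) (hx : x ≠ 0)
    (hsum : 0 ≤ ∑ i, x i) : ∃ i j, i ≠ j ∧ 0 < x i + x j := by
  classical
  obtain ⟨i, hi⟩ := exists_pos_of_sum_nonneg hx hsum
  by_contra! hpair
  have hrest : ∑ j ∈ Finset.univ.erase i, x j ≤ (Fintype.card ι - 1) • -x i := by
    rw [← Finset.card_univ, ← Finset.card_erase_of_mem (Finset.mem_univ i)]
    exact Finset.sum_le_card_nsmul _ _ _ fun j hj ↦
      le_neg_iff_add_nonpos_left.2 (hpair i j (Finset.ne_of_mem_erase hj).symm)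
  have hcard : 2 • x i ≤ (Fintype.card ι - 1) • x i :=
    nsmul_le_nsmul_left hi.le (Nat.le_sub_one_of_lt hι)
  have hsum_neg : ∑ j, x j < 0 := calc
    ∑ j, x j = x i + ∑ j ∈ Finset.univ.erase i, x j :=
      (Finset.add_sum_erase _ x (Finset.mem_univ i)).symm
    _ ≤ x i + -(2 • x i) := by
      rw [smul_neg] at hrest
      exact add_le_add_right (hrest.trans (neg_le_neg hcard)) _
    _ = -x i := by abel
    _ < 0 := neg_neg_of_pos hi
  exact hsum_neg.not_ge hsum

end Coordinates

variable {a b r x y : Fin 8 → ℝ}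

section Lattice

lemma dot_eq_dotProduct : dot a b = a ⬝ᵥ b := rfl

lemma dot_comm (a b : Fin 8 → ℝ) : dot a b = dot b a := dotProduct_comm a b

/-- The root `h = (1/2, …, 1/2)`. Together with the integer vectors of even coordinate sum it
generates the E8 lattice, and it serves as the base point for the action of the Weyl group. -/
def halfOnes : Fin 8 → ℝ := fun _ ↦ 1 / 2

lemma dot_halfOnes (x : Fin 8 → ℝ) : dot halfOnes x = (∑ i, x i) / 2 := by
  simp only [dot, halfOnes, ← Finset.mul_sum]
  ring

lemma inLambda_iff_exists_smul_halfOnes_add : inLambda a ↔ ∃ (k : ℤ) (n : Fin 8 → ℤ),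
    Even (∑ i, n i) ∧ a = (k : ℝ) • halfOnes + fun i ↦ (n i : ℝ) := by
  constructor
  · rintro ⟨hcoord | hcoord, m, hm⟩ <;> choose n hn using hcoord <;>
      simp only [hn, Finset.sum_add_distrib, Finset.sum_const, Finset.card_univ,
        Fintype.card_fin, nsmul_eq_mul] at hm
    · refine ⟨0, n, even_iff_two_dvd.2 ⟨m, by exact_mod_cast hm⟩, ?_⟩
      ext i
      simp [hn]
    · refine ⟨1, n, even_iff_two_dvd.2 ⟨m - 2, ?_⟩, ?_⟩
      · rw [← Int.cast_inj (α := ℝ)]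
        push_cast at hm ⊢
        linarith
      · ext i
        simp only [hn, halfOnes, Pi.add_apply, Pi.smul_apply, smul_eq_mul]
        push_cast
        ring
  · rintro ⟨k, n, ⟨m, hm⟩, rfl⟩
    refine ⟨?_, 2 * k + m, ?_⟩
    · obtain ⟨t, rfl | rfl⟩ := Int.even_or_odd' k
      · refine .inl fun i ↦ ⟨t + n i, ?_⟩
        simp only [halfOnes, Pi.add_apply, Pi.smul_apply, smul_eq_mul]
        push_cast
        ring
      · refine .inr fun i ↦ ⟨t + n i, ?_⟩
        simp only [halfOnes, Pi.add_apply, Pi.smul_apply, smul_eq_mul]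
        push_cast
        ring
    · simp only [halfOnes, Pi.add_apply, Pi.smul_apply, smul_eq_mul, Finset.sum_add_distrib,
        Finset.sum_const, Finset.card_univ, Fintype.card_fin, nsmul_eq_mul, ← Int.cast_sum, hm]
      push_cast
      ring

/-- The E8 lattice `Λ` as an additive subgroup of `ℝ^8`. -/
def e8Lattice : AddSubgroup (Fin 8 → ℝ) where
  carrier := {a | inLambda a}
  zero_mem' := inLambda_iff_exists_smul_halfOnes_add.2 ⟨0, 0, by simp, by ext; simp⟩
  add_mem' {a b} ha hb := by
    obtain ⟨k, m, hm, rfl⟩ := inLambda_iff_exists_smul_halfOnes_add.1 ha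
    obtain ⟨l, n, hn, rfl⟩ := inLambda_iff_exists_smul_halfOnes_add.1 hb
    refine inLambda_iff_exists_smul_halfOnes_add.2 ⟨k + l, m + n, ?_, ?_⟩
    · simpa only [Pi.add_apply, Finset.sum_add_distrib] using hm.add hn
    · ext i
      simp only [Pi.add_apply, Pi.smul_apply, smul_eq_mul]
      push_cast
      ring
  neg_mem' {a} ha := by
    obtain ⟨k, n, hn, rfl⟩ := inLambda_iff_exists_smul_halfOnes_add.1 ha
    refine inLambda_iff_exists_smul_halfOnes_add.2 ⟨-k, -n, ?_, ?_⟩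
    · simpa only [Pi.neg_apply, Finset.sum_neg_distrib] using hn.neg
    · ext i
      simp only [Pi.add_apply, Pi.neg_apply, Pi.smul_apply, smul_eq_mul]
      push_cast
      ring

lemma inLambda.exists_int_dot_eq (ha : inLambda a) (hb : inLambda b) :
    ∃ n : ℤ, dot a b = n := by
  obtain ⟨k, m, ⟨s, hs⟩, rfl⟩ := inLambda_iff_exists_smul_halfOnes_add.1 ha
  obtain ⟨l, n, ⟨t, ht⟩, rfl⟩ := inLambda_iff_exists_smul_halfOnes_add.1 hb
  have hself : dot halfOnes halfOnes = 2 := by norm_num [dot_halfOnes, halfOnes]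
  have hm : dot halfOnes (fun i ↦ (m i : ℝ)) = s := by
    rw [dot_halfOnes, ← Int.cast_sum, hs]
    push_cast
    ring
  have hn : dot halfOnes (fun i ↦ (n i : ℝ)) = t := by
    rw [dot_halfOnes, ← Int.cast_sum, ht]
    push_cast
    ring
  have hmn : dot (fun i ↦ (m i : ℝ)) (fun i ↦ (n i : ℝ)) = (∑ i, m i * n i : ℤ) := by
    simp [dot]
  refine ⟨2 * k * l + k * t + l * s + ∑ i, m i * n i, ?_⟩
  simp only [dot_eq_dotProduct, add_dotProduct, dotProduct_add, smul_dotProduct,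
    dotProduct_smul, smul_eq_mul, dotProduct_comm _ halfOnes] at hself hm hn hmn ⊢
  rw [hself, hm, hn, hmn]
  push_cast
  ring

end Lattice

section Roots

lemma isRoot.ne_zero (hx : isRoot x) : x ≠ 0 := by
  rintro rfl
  simpa [dot] using hx.2

lemma isRoot.neg (hx : isRoot x) : isRoot (-x) :=
  ⟨e8Lattice.neg_mem hx.1, by simpa only [dot, Pi.neg_apply, neg_mul_neg] using hx.2⟩

lemma dot_sub_self (x y : Fin 8 → ℝ) :
    dot (x - y) (x - y) = dot x x + dot y y - 2 * dot x y := by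
  simp only [dot_eq_dotProduct, sub_dotProduct, dotProduct_sub, dotProduct_comm y x]
  ring

lemma isRoot.sub (hx : isRoot x) (hy : isRoot y) (hxy : dot x y = 1) : isRoot (x - y) :=
  ⟨e8Lattice.sub_mem hx.1 hy.1, by rw [dot_sub_self, hx.2, hy.2, hxy]; norm_num⟩

lemma isRoot.eq_or_dot_eq_one_of_dot_pos (hx : isRoot x) (hy : isRoot y) (hxy : 0 < dot x y) :
    x = y ∨ dot x y = 1 := by
  refine or_iff_not_imp_left.2 fun hne ↦ ?_
  obtain ⟨n, hn⟩ := hx.1.exists_int_dot_eq hy.1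
  have hlt : dot x y < 2 := by
    have hsub : 0 < dot (x - y) (x - y) :=
      (Finset.sum_nonneg fun i _ ↦ mul_self_nonneg _).lt_of_ne' fun h ↦
        hne (sub_eq_zero.1 (dotProduct_self_eq_zero.1 h))
    rw [dot_sub_self, hx.2, hy.2] at hsub
    linarith
  rw [hn] at hxy hlt ⊢
  norm_cast at hxy hlt ⊢
  lia

lemma isRoot_halfOnes : isRoot halfOnes :=
  ⟨inLambda_iff_exists_smul_halfOnes_add.2 ⟨1, 0, by simp, by ext; simp⟩,
    by norm_num [dot_halfOnes, halfOnes]⟩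

end Roots

section WeylGroup

/-- The Weyl group `W` as a subgroup of the linear automorphisms of `ℝ^8`. -/
def weylGroup : Subgroup ((Fin 8 → ℝ) ≃ₗ[ℝ] (Fin 8 → ℝ)) where
  carrier := {w | IsWeyl w}
  one_mem' := ⟨fun _ _ ↦ rfl, Set.image_id _⟩
  mul_mem' {v w} hv hw := ⟨fun a b ↦ (hv.1 _ _).trans (hw.1 a b),
    (Set.image_comp v w _).trans (by rw [hw.2, hv.2])⟩
  inv_mem' {w} hw := ⟨fun a b ↦ by
      simpa only [LinearEquiv.coe_inv, LinearEquiv.apply_symm_apply] using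
        (hw.1 (w.symm a) (w.symm b)).symm,
    (congrArg (⇑w.symm '' ·) hw.2.symm).trans (w.symm_image_image _)⟩

lemma IsWeyl.isRoot_apply {w : (Fin 8 → ℝ) ≃ₗ[ℝ] (Fin 8 → ℝ)} (hw : IsWeyl w)
    (hx : isRoot x) : isRoot (w x) :=
  hw.2.subset (Set.mem_image_of_mem w hx)

/-- The reflection `x ↦ x - (a · x) a` in the hyperplane orthogonal to a root `a`. -/
def isRoot.reflection (ha : isRoot a) : (Fin 8 → ℝ) ≃ₗ[ℝ] (Fin 8 → ℝ) :=
  Module.reflection (f := dotProductEquiv ℝ (Fin 8) a) (x := a) ha.2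

lemma isRoot.reflection_apply (ha : isRoot a) (x : Fin 8 → ℝ) :
    ha.reflection x = x - dot a x • a :=
  Module.reflection_apply ..

lemma isRoot.isWeyl_reflection (ha : isRoot a) : IsWeyl ha.reflection := by
  have hdot (x y : Fin 8 → ℝ) : dot (ha.reflection x) (ha.reflection y) = dot x y := by
    have haa : a ⬝ᵥ a = 2 := ha.2
    simp only [ha.reflection_apply, dot_eq_dotProduct, sub_dotProduct, dotProduct_sub,
      smul_dotProduct, dotProduct_smul, smul_eq_mul, haa, dotProduct_comm x a]
    ring
  have hmaps : Set.MapsTo ha.reflection {x | isRoot x} {x | isRoot x} := by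
    refine fun x hx ↦ ⟨?_, (hdot x x).trans hx.2⟩
    obtain ⟨n, hn⟩ := ha.1.exists_int_dot_eq hx.1
    rw [ha.reflection_apply, hn, Int.cast_smul_eq_zsmul]
    exact e8Lattice.sub_mem hx.1 (e8Lattice.zsmul_mem ha.1 n)
  exact ⟨hdot, (Module.bijOn_reflection_of_mapsTo _ hmaps).image_eq⟩

end WeylGroup

section Conjugacy

/-- Conjugacy over `r`: two vectors are related when some element of `W` fixing `r` moves one to
the other. For `r = 0` this is conjugacy under the whole of `W`. -/
def weylConj (r : Fin 8 → ℝ) : Setoid (Fin 8 → ℝ) :=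
  MulAction.orbitRel (MulAction.stabilizer weylGroup r) (Fin 8 → ℝ)

lemma weylConj_iff : weylConj r x y ↔
    ∃ w : (Fin 8 → ℝ) ≃ₗ[ℝ] (Fin 8 → ℝ), IsWeyl w ∧ w r = r ∧ w x = y := by
  refine ⟨fun h ↦ ?_, fun ⟨w, hw, hr, hxy⟩ ↦ (weylConj r).symm' ⟨⟨⟨w, hw⟩, hr⟩, hxy⟩⟩
  obtain ⟨⟨⟨w, hw⟩, hr⟩, hxy⟩ := (weylConj r).symm' h
  exact ⟨w, hw, hr, hxy⟩

lemma weylConj_of_neg (h : weylConj r (-x) (-y)) : weylConj r x y := by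
  obtain ⟨w, hw, hr, hxy⟩ := weylConj_iff.1 h
  exact weylConj_iff.2 ⟨w, hw, hr, neg_injective ((map_neg w x).symm.trans hxy)⟩

lemma isRoot.weylConj_neg (hx : isRoot x) (hr : dot x r = 0) : weylConj r x (-x) := by
  refine weylConj_iff.2 ⟨hx.reflection, hx.isWeyl_reflection, ?_, ?_⟩
  · rw [hx.reflection_apply, hr, zero_smul, sub_zero]
  · rw [hx.reflection_apply, hx.2, two_smul, sub_add_cancel_left]

lemma weylConj_of_dot_pos (hx : isRoot x) (hy : isRoot y) (hr : dot r x = dot r y)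
    (hxy : 0 < dot x y) : weylConj r x y := by
  obtain rfl | hxy := hx.eq_or_dot_eq_one_of_dot_pos hy hxy
  · exact (weylConj r).refl' x
  have hsub := hx.sub hy hxy
  refine weylConj_iff.2 ⟨hsub.reflection, hsub.isWeyl_reflection, ?_, ?_⟩
  · have horth : dot (x - y) r = 0 := by
      rw [dot_comm, dot_eq_dotProduct, dotProduct_sub, sub_eq_zero]
      exact hr
    rw [hsub.reflection_apply, horth, zero_smul, sub_zero]
  · have hone : dot (x - y) x = 1 := by
      rw [dot_eq_dotProduct, sub_dotProduct, ← dot_eq_dotProduct, ← dot_eq_dotProduct, hx.2,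
        dot_comm, hxy]
      norm_num
    rw [hsub.reflection_apply, hone, one_smul, sub_sub_cancel]

end Conjugacy

section IntegralRoots

local notation "ε" i:max => (Pi.single i 1 : Fin 8 → ℝ)

variable {i j k l : Fin 8}

lemma inLambda_single_add_single (i j : Fin 8) : inLambda (ε i + ε j) := by
  refine inLambda_iff_exists_smul_halfOnes_add.2 ⟨0, Pi.single i 1 + Pi.single j 1, ?_, ?_⟩
  · simp [Finset.sum_add_distrib]
  · ext m
    simp [Pi.single_apply]

lemma isRoot_single_add_single (hij : i ≠ j) : isRoot (ε i + ε j) :=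
  ⟨inLambda_single_add_single i j, by norm_num [dot_eq_dotProduct, hij, hij.symm]⟩

lemma isRoot_single_sub_single (hij : i ≠ j) : isRoot (ε i - ε j) := by
  refine ⟨?_, by norm_num [dot_eq_dotProduct, hij, hij.symm]⟩
  have hsub := e8Lattice.sub_mem (inLambda_single_add_single i j) (inLambda_single_add_single j j)
  rwa [add_sub_add_right_eq_sub] at hsub

lemma dot_halfOnes_single_add_single (i j : Fin 8) : dot halfOnes (ε i + ε j) = 1 := by
  norm_num [dot_halfOnes, Finset.sum_add_distrib]

lemma dot_halfOnes_single_sub_single (i j : Fin 8) : dot halfOnes (ε i - ε j) = 0 := by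
  simp [dot_halfOnes]

lemma dot_single_add_single (x : Fin 8 → ℝ) (i j : Fin 8) : dot x (ε i + ε j) = x i + x j := by
  simp [dot_eq_dotProduct, dotProduct_add]

lemma dot_single_sub_single (x : Fin 8 → ℝ) (i j : Fin 8) : dot x (ε i - ε j) = x i - x j := by
  simp [dot_eq_dotProduct, dotProduct_sub]

lemma weylConj_single_add_single_left (hij : i ≠ j) (hik : i ≠ k) :
    weylConj halfOnes (ε i + ε j) (ε i + ε k) := by
  refine weylConj_of_dot_pos (isRoot_single_add_single hij) (isRoot_single_add_single hik)
    (by simp only [dot_halfOnes_single_add_single]) ?_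
  simp only [dot_single_add_single, Pi.add_apply, Pi.single_apply]
  split_ifs <;> simp_all

lemma weylConj_single_add_single (hij : i ≠ j) (hkl : k ≠ l) :
    weylConj halfOnes (ε i + ε j) (ε k + ε l) := by
  obtain rfl | hil := eq_or_ne i l
  · simpa only [add_comm] using weylConj_single_add_single_left hij hkl.symm
  · have hleft : weylConj halfOnes (ε i + ε l) (ε k + ε l) := by
      simpa only [add_comm] using weylConj_single_add_single_left hil.symm hkl.symm
    exact (weylConj halfOnes).trans' (weylConj_single_add_single_left hij hil) hleft

lemma weylConj_single_sub_single_left (hij : i ≠ j) (hik : i ≠ k) :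
    weylConj halfOnes (ε i - ε j) (ε i - ε k) := by
  refine weylConj_of_dot_pos (isRoot_single_sub_single hij) (isRoot_single_sub_single hik)
    (by simp only [dot_halfOnes_single_sub_single]) ?_
  simp only [dot_single_sub_single, Pi.sub_apply, Pi.single_apply]
  split_ifs <;> simp_all

lemma weylConj_single_sub_single_right (hik : i ≠ k) (hjk : j ≠ k) :
    weylConj halfOnes (ε i - ε k) (ε j - ε k) :=
  weylConj_of_neg (by simpa only [neg_sub] using
    weylConj_single_sub_single_left hik.symm hjk.symm)

lemma weylConj_single_sub_single (hij : i ≠ j) (hkl : k ≠ l) :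
    weylConj halfOnes (ε i - ε j) (ε k - ε l) := by
  obtain rfl | hil := eq_or_ne i l
  · have hneg := (isRoot_single_sub_single hij).weylConj_neg
      (by rw [dot_comm, dot_halfOnes_single_sub_single])
    rw [neg_sub] at hneg
    exact (weylConj halfOnes).trans' hneg (weylConj_single_sub_single_right hij.symm hkl)
  · exact (weylConj halfOnes).trans' (weylConj_single_sub_single_left hij hil)
      (weylConj_single_sub_single_right hil hkl)

lemma isRoot.exists_dot_single_add_single_pos (hx : isRoot x) (hh : 0 ≤ dot halfOnes x) :
    ∃ i j, i ≠ j ∧ 0 < dot x (ε i + ε j) := by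
  rw [dot_halfOnes] at hh
  obtain ⟨i, j, hij, hpos⟩ :=
    exists_ne_add_pos_of_sum_nonneg (by simp) hx.ne_zero (by linarith)
  exact ⟨i, j, hij, by rwa [dot_single_add_single]⟩

lemma isRoot.weylConj_single_add_single_of_dot_eq_one (hx : isRoot x)
    (hh : dot halfOnes x = 1) (hij : i ≠ j) :
    weylConj halfOnes x (ε i + ε j) := by
  obtain ⟨k, l, hkl, hpos⟩ := hx.exists_dot_single_add_single_pos (hh ▸ zero_le_one)
  have hx_kl := weylConj_of_dot_pos hx (isRoot_single_add_single hkl)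
    (hh.trans (dot_halfOnes_single_add_single k l).symm) hpos
  exact (weylConj halfOnes).trans' hx_kl (weylConj_single_add_single hkl hij)

lemma isRoot.weylConj_single_sub_single_of_dot_eq_zero (hx : isRoot x)
    (hh : dot halfOnes x = 0) (hij : i ≠ j) :
    weylConj halfOnes x (ε i - ε j) := by
  have hsum : ∑ i, x i = 0 := by
    rw [dot_halfOnes] at hh
    linarith
  obtain ⟨⟨l, hl⟩, k, hk⟩ := exists_neg_and_exists_pos_of_sum_eq_zero hx.ne_zero hsum
  have hkl : k ≠ l := by
    rintro rfl
    exact hl.not_gt hk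
  have hx_kl := weylConj_of_dot_pos hx (isRoot_single_sub_single hkl)
    (hh.trans (dot_halfOnes_single_sub_single k l).symm)
    (by rw [dot_single_sub_single]; linarith)
  exact (weylConj halfOnes).trans' hx_kl (weylConj_single_sub_single hkl hij)

end IntegralRoots

section Transitivity

lemma isRoot.weylConj_zero_halfOnes (hx : isRoot x) : weylConj 0 x halfOnes := by
  wlog hh : 0 ≤ dot halfOnes x generalizing x
  · have hneg : 0 ≤ dot halfOnes (-x) := by
      rw [dot_eq_dotProduct, dotProduct_neg, ← dot_eq_dotProduct]
      linarith
    exact (weylConj 0).trans' (hx.weylConj_neg (dotProduct_zero x)) (this hx.neg hneg)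
  obtain ⟨i, j, hij, hpos⟩ := hx.exists_dot_single_add_single_pos hh
  have hroot := isRoot_single_add_single hij
  refine (weylConj 0).trans' (weylConj_of_dot_pos hx hroot ?_ hpos)
    (weylConj_of_dot_pos hroot isRoot_halfOnes ?_ ?_)
  · simp only [dot_eq_dotProduct, zero_dotProduct]
  · simp only [dot_eq_dotProduct, zero_dotProduct]
  · rw [dot_comm, dot_halfOnes_single_add_single]
    exact one_pos

lemma isRoot.weylConj_halfOnes_of_dot_eq (hx : isRoot x) (hy : isRoot y)
    (hxy : dot halfOnes x = dot halfOnes y) : weylConj halfOnes x y := by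
  wlog hh : 0 ≤ dot halfOnes x generalizing x y
  · have hdot_neg (z : Fin 8 → ℝ) : dot halfOnes (-z) = -dot halfOnes z := dotProduct_neg ..
    refine weylConj_of_neg (this hx.neg hy.neg ?_ ?_) <;> simp only [hdot_neg]
    · rw [hxy]
    · linarith
  have h01 : (0 : Fin 8) ≠ 1 := by decide
  rcases hh.eq_or_lt with hzero | hpos
  · exact (weylConj halfOnes).trans' (hx.weylConj_single_sub_single_of_dot_eq_zero hzero.symm h01)
      ((weylConj halfOnes).symm'
        (hy.weylConj_single_sub_single_of_dot_eq_zero (hxy ▸ hzero.symm) h01))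
  obtain rfl | hone := isRoot_halfOnes.eq_or_dot_eq_one_of_dot_pos hx hpos
  · exact weylConj_of_dot_pos hx hy hxy (hxy ▸ hpos)
  · exact (weylConj halfOnes).trans' (hx.weylConj_single_add_single_of_dot_eq_one hone h01)
      ((weylConj halfOnes).symm' (hy.weylConj_single_add_single_of_dot_eq_one (hxy ▸ hone) h01))

theorem stmt_1_general {e1 e2 f1 f2 : Fin 8 → ℝ}
    (he1 : isRoot e1) (he2 : isRoot e2) (hf1 : isRoot f1) (hf2 : isRoot f2)
    (hdot : dot e1 e2 = dot f1 f2) :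
    ∃ w : (Fin 8 → ℝ) ≃ₗ[ℝ] (Fin 8 → ℝ), IsWeyl w ∧ w e1 = f1 ∧ w e2 = f2 := by
  obtain ⟨u, hu, -, hue⟩ := weylConj_iff.1 he1.weylConj_zero_halfOnes
  obtain ⟨v, hv, -, hvf⟩ := weylConj_iff.1 hf1.weylConj_zero_halfOnes
  have hheight : dot halfOnes (u e2) = dot halfOnes (v f2) := by
    rw [← hue, hu.1, hdot, ← hv.1, hvf, hue]
  obtain ⟨w, hw, hwh, hwuv⟩ := weylConj_iff.1
    ((hu.isRoot_apply he2).weylConj_halfOnes_of_dot_eq (hv.isRoot_apply hf2) hheight)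
  refine ⟨v⁻¹ * w * u, weylGroup.mul_mem (weylGroup.mul_mem (weylGroup.inv_mem hv) hw) hu, ?_, ?_⟩
  · simp [hue, hwh, LinearEquiv.symm_apply_eq, hvf]
  · simp [hwuv]

end Transitivity

/-- For each `a ∈ {-2,-1,0,1}`, the Weyl group acts transitively on
the set of ordered pairs of roots with dot product `a`. -/
theorem stmt_1 (a : ℝ) (ha : a ∈ ({-2, -1, 0, 1} : Set ℝ))
    (e1 e2 f1 f2 : Fin 8 → ℝ)
    (he1 : isRoot e1) (he2 : isRoot e2) (hf1 : isRoot f1) (hf2 : isRoot f2)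
    (hde : dot e1 e2 = a) (hdf : dot f1 f2 = a) :
    ∃ w : (Fin 8 → ℝ) ≃ₗ[ℝ] (Fin 8 → ℝ), IsWeyl w ∧ w e1 = f1 ∧ w e2 = f2 :=
  stmt_1_general he1 he2 hf1 hf2 (hde.trans hdf.symm)
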